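/- Let A be a nonsingular Z-matrix with unit diagonal, 0 ≤ γ ≤ ω ≤ 1, ω ≠ 0, and α_ij ∈ [0,1] for i ≠ j. If the AOR iteration matrix L_{γ,ω} = (I - γL)⁻¹[(1-ω)I + (ω-γ)L + ωU] satisfies ρ(L_{γ,ω}) < 1, then the preconditioned AOR iteration matrix L̃_{γ,ω} for the system P̃Ax = P̃b satisfies ρ(L̃_{γ,ω}) ≤ ρ(L_{γ,ω}) < 1. -/

import Mathlib

/-!
Write `c i j = 1, γ, 0` according as `i = j`, `j < i`, `i < j`, so that the two factors of the AOR
splitting of `B` are `M_B = (c i j * B i j)` and `N_B`, with `M_B - N_B = ω B`. For a Z-matrix with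
positive diagonal, `M_B` is lower triangular with nonnegative inverse and `N_B ≥ 0`.

Fix `l` with `ρ(M_A⁻¹ N_A) < l < 1`. Since the powers of `l⁻¹ M_A⁻¹ N_A` tend to `0`, a truncated
Neumann series applied to `M_A⁻¹ 1` gives a strictly positive `x` with `l M_A x - N_A x > 0`.
This avoids the Perron-Frobenius theorem, and with it any irreducibility issue.
It follows that `M_A x ≥ 0` and that `ω A x = (1 - l) M_A x + (l M_A x - N_A x) > 0`.
With `P` the preconditioner and `B = P A`, the latter gives `B x > 0`, so the Z-matrix `B` has
positive diagonal. An entrywise comparison gives `M_B x ≤ P M_A x`, whence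
`l M_B x - N_B x = ω P A x - (1 - l) M_B x ≥ P (l M_A x - N_A x) ≥ 0`.
Thus `M_B⁻¹ N_B x ≤ l x` with `x > 0`, which bounds the spectral radius of the nonnegative matrix
`M_B⁻¹ N_B` by `l`. Finally `l` decreases to `ρ(M_A⁻¹ N_A)`.
-/

open Matrix BigOperators Finset

/-- Spectral radius of a real matrix: supremum of norms of its complex eigenvalues. -/
noncomputable def specRad {n : ℕ} (A : Matrix (Fin n) (Fin n) ℝ) : ℝ :=
  sSup ((fun μ : ℂ => ‖μ‖) '' spectrum ℂ (A.map (algebraMap ℝ ℂ)))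

/-- A Z-matrix has nonpositive off-diagonal entries. -/
def IsZMatrix {n : ℕ} (A : Matrix (Fin n) (Fin n) ℝ) : Prop :=
  ∀ i j, i ≠ j → A i j ≤ 0

/-- An M-matrix is a nonsingular Z-matrix with entrywise nonnegative inverse. -/
def IsMMatrix {n : ℕ} (A : Matrix (Fin n) (Fin n) ℝ) : Prop :=
  IsZMatrix A ∧ IsUnit A.det ∧ ∀ i j, 0 ≤ A⁻¹ i j

/-- `-L`: the strictly lower triangular part of `A` (so `lowerPart A ≥ 0` for a Z-matrix). -/
def lowerPart {n : ℕ} (A : Matrix (Fin n) (Fin n) ℝ) : Matrix (Fin n) (Fin n) ℝ :=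
  Matrix.of fun i j => if (j : ℕ) < (i : ℕ) then -A i j else 0

/-- `-U`: the strictly upper triangular part of `A`. -/
def upperPart {n : ℕ} (A : Matrix (Fin n) (Fin n) ℝ) : Matrix (Fin n) (Fin n) ℝ :=
  Matrix.of fun i j => if (i : ℕ) < (j : ℕ) then -A i j else 0

/-- Diagonal part of `A`. -/
def diagPart {n : ℕ} (A : Matrix (Fin n) (Fin n) ℝ) : Matrix (Fin n) (Fin n) ℝ :=
  Matrix.of fun i j => if i = j then A i j else 0

/-- The preconditioner `P̃ = I + L(α) + U(α)`: unit diagonal, off-diagonal entries `-α_ij a_ij`. -/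
def precond {n : ℕ} (α : Fin n → Fin n → ℝ) (A : Matrix (Fin n) (Fin n) ℝ) :
    Matrix (Fin n) (Fin n) ℝ :=
  Matrix.of fun i j => if i = j then 1 else -(α i j) * A i j

/-- AOR iteration matrix of `B = D_B - L_B - U_B`:
`(D_B - γ L_B)⁻¹ [(1-ω) D_B + (ω-γ) L_B + ω U_B]`. -/
noncomputable def aorMatrix {n : ℕ} (B : Matrix (Fin n) (Fin n) ℝ) (γ ω : ℝ) :
    Matrix (Fin n) (Fin n) ℝ :=
  (diagPart B - γ • lowerPart B)⁻¹ *
    ((1 - ω) • diagPart B + (ω - γ) • lowerPart B + ω • upperPart B)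

/-- Irreducibility: the directed graph with an edge `i → j` whenever `A i j ≠ 0`
is strongly connected. -/
def IsIrreducibleMat {n : ℕ} (A : Matrix (Fin n) (Fin n) ℝ) : Prop :=
  ∀ i j : Fin n, Relation.ReflTransGen (fun a b => A a b ≠ 0) i j

/-! ### Bounds on the spectral radius -/

open Filter Topology in
/-- A consequence of Gelfand's formula. -/
lemma eventually_norm_pow_le_of_spectralRadius_lt {R : Type*} [NormedRing R] [NormedAlgebra ℂ R] [CompleteSpace R]
    (a : R) (r : ℝ) (h : spectralRadius ℂ a < ENNReal.ofReal r) :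
    ∀ᶠ m : ℕ in atTop, ‖a ^ m‖ ≤ r ^ m := by
  have h1 := (spectrum.pow_norm_pow_one_div_tendsto_nhds_spectralRadius a).eventually
    (gt_mem_nhds h)
  filter_upwards [h1, eventually_gt_atTop 0] with m hm hm0
  have h2 : ‖a ^ m‖ ^ (1 / m : ℝ) < r := by
    by_contra! hc
    exact absurd hm (not_lt.mpr (ENNReal.ofReal_le_ofReal hc))
  have h3 : (‖a ^ m‖ ^ (1 / m : ℝ)) ^ m ≤ r ^ m :=
    pow_le_pow_left₀ (by positivity) h2.le m
  rwa [one_div, Real.rpow_inv_natCast_pow (norm_nonneg _) hm0.ne'] at h3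

lemma norm_le_specRad {n : ℕ} (T : Matrix (Fin n) (Fin n) ℝ) {μ : ℂ}
    (hμ : μ ∈ spectrum ℂ (T.map (algebraMap ℝ ℂ))) : ‖μ‖ ≤ specRad T :=
  le_csSup ((Matrix.finite_spectrum _).image _).bddAbove ⟨μ, hμ, rfl⟩

lemma specRad_nonneg {n : ℕ} (T : Matrix (Fin n) (Fin n) ℝ) : 0 ≤ specRad T := by
  apply Real.sSup_nonneg
  rintro _ ⟨μ, -, rfl⟩
  exact norm_nonneg μ

open Filter Topology in
lemma tendsto_pow_entry {n : ℕ} (T : Matrix (Fin n) (Fin n) ℝ) (l : ℝ) (hl : specRad T < l)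
    (i j : Fin n) : Tendsto (fun m : ℕ => ((l⁻¹ • T) ^ m) i j) atTop (𝓝 0) := by
  let _ := Matrix.linftyOpNormedRing (n := Fin n) (α := ℂ)
  let _ := Matrix.linftyOpNormedAlgebra (R := ℂ) (n := Fin n) (α := ℂ)
  have _ : CompleteSpace (Matrix (Fin n) (Fin n) ℂ) := FiniteDimensional.complete ℂ _
  have h0 := specRad_nonneg T
  obtain ⟨r, hr1, hr2⟩ := exists_between hl
  have hr0 : 0 < r := by linarith
  have hl0 : 0 < l := by linarith
  have hs : spectralRadius ℂ (T.map (algebraMap ℝ ℂ)) < ENNReal.ofReal r := by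
    refine lt_of_le_of_lt (iSup₂_le fun μ hμ => ?_)
      ((ENNReal.ofReal_lt_ofReal_iff hr0).mpr hr1)
    rw [← ENNReal.ofReal_coe_nnreal, coe_nnnorm]
    exact ENNReal.ofReal_le_ofReal (norm_le_specRad T hμ)
  have hlim : Tendsto (fun m : ℕ => (l⁻¹ * r) ^ m) atTop (𝓝 0) := by
    apply tendsto_pow_atTop_nhds_zero_of_lt_one (by positivity)
    rw [inv_mul_lt_iff₀ hl0]; linarith
  refine squeeze_zero_norm' ?_ hlim
  filter_upwards [eventually_norm_pow_le_of_spectralRadius_lt _ r hs] with m hm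
  have h1 : ‖(T ^ m) i j‖ ≤ r ^ m := by
    refine le_trans ?_ hm
    rw [← Matrix.map_pow]
    rw [Matrix.linfty_opNorm_def]
    have h2 := Finset.le_sup (f := fun i => ∑ j, ‖(T ^ m).map (algebraMap ℝ ℂ) i j‖₊) (mem_univ i)
    have h3 := Finset.single_le_sum (f := fun j => ‖(T ^ m).map (algebraMap ℝ ℂ) i j‖₊)
      (fun _ _ => zero_le) (mem_univ j)
    have h4 := NNReal.coe_le_coe.mpr (h3.trans h2)
    simpa only [Matrix.map_apply, coe_nnnorm, norm_algebraMap'] using h4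
  rw [smul_pow, Matrix.smul_apply, smul_eq_mul, norm_mul, mul_pow]
  have : ‖(l⁻¹) ^ m‖ = l⁻¹ ^ m := by rw [Real.norm_of_nonneg]; positivity
  rw [this]
  gcongr

/-- A Collatz–Wielandt bound: eigenvectors are compared with `x` at an index maximizing
`‖z i‖ / x i`. -/
lemma specRad_le_of_mulVec_le {n : ℕ} (T : Matrix (Fin n) (Fin n) ℝ) (hT : ∀ i j, 0 ≤ T i j)
    (x : Fin n → ℝ) (hx : ∀ i, 0 < x i) (l : ℝ) (hl : 0 ≤ l)
    (h : ∀ i, (T *ᵥ x) i ≤ l * x i) : specRad T ≤ l := by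
  refine Real.sSup_le ?_ hl
  rintro _ ⟨μ, hμ, rfl⟩
  rw [← Matrix.spectrum_toLin', ← Module.End.hasEigenvalue_iff_mem_spectrum] at hμ
  obtain ⟨z, hz⟩ := hμ.exists_hasEigenvector
  have hz0 : z ≠ 0 := hz.2
  have hzz : (T.map (algebraMap ℝ ℂ)) *ᵥ z = μ • z := by
    simpa using hz.apply_eq_smul
  obtain ⟨k, hk⟩ := Function.ne_iff.mp hz0
  obtain ⟨i, -, hi⟩ := Finset.exists_max_image Finset.univ (fun j => ‖z j‖ / x j) ⟨k, mem_univ _⟩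
  set c := ‖z i‖ / x i with hc
  have hcpos : 0 < c := lt_of_lt_of_le (div_pos (norm_pos_iff.mpr hk) (hx k)) (hi k (mem_univ _))
  have hzi : ‖z i‖ = c * x i := by rw [hc, div_mul_cancel₀ _ (hx i).ne']
  have hzj : ∀ j, ‖z j‖ ≤ c * x j := fun j => by
    have := hi j (mem_univ _)
    rwa [div_le_iff₀ (hx j)] at this
  have h1 : ‖μ‖ * ‖z i‖ ≤ l * ‖z i‖ := by
    have h2 := congrFun hzz i
    have h3 : ‖μ‖ * ‖z i‖ = ‖∑ j, ((T i j : ℝ) : ℂ) * z j‖ := by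
      rw [← norm_mul]
      congr 1
      simpa [Matrix.mulVec, dotProduct] using h2.symm
    rw [h3]
    calc ‖∑ j, ((T i j : ℝ) : ℂ) * z j‖ ≤ ∑ j, ‖((T i j : ℝ) : ℂ) * z j‖ := norm_sum_le _ _
      _ ≤ ∑ j, c * (T i j * x j) := by
        refine Finset.sum_le_sum fun j _ => ?_
        rw [norm_mul, Complex.norm_real, Real.norm_of_nonneg (hT i j)]
        nlinarith [mul_le_mul_of_nonneg_left (hzj j) (hT i j)]
      _ = c * (T *ᵥ x) i := by simp [Matrix.mulVec, dotProduct, Finset.mul_sum]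
      _ ≤ c * (l * x i) := mul_le_mul_of_nonneg_left (h i) hcpos.le
      _ = l * ‖z i‖ := by rw [hzi]; ring
  have hpos : 0 < ‖z i‖ := by rw [hzi]; exact mul_pos hcpos (hx i)
  exact le_of_mul_le_mul_right h1 hpos

/-! ### The AOR splitting of a Z-matrix -/

/-- Weight with which the entry `B i j` enters the left factor of the AOR splitting of `B`. -/
def aorWeight {n : ℕ} (γ : ℝ) (i j : Fin n) : ℝ := if i = j then 1 else if j < i then γ else 0

/-- The left factor `D_B - γ L_B` of the AOR splitting. -/
def aorLeft {n : ℕ} (B : Matrix (Fin n) (Fin n) ℝ) (γ : ℝ) : Matrix (Fin n) (Fin n) ℝ :=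
  diagPart B - γ • lowerPart B

/-- The right factor `(1-ω) D_B + (ω-γ) L_B + ω U_B` of the AOR splitting. -/
def aorRight {n : ℕ} (B : Matrix (Fin n) (Fin n) ℝ) (γ ω : ℝ) : Matrix (Fin n) (Fin n) ℝ :=
  (1 - ω) • diagPart B + (ω - γ) • lowerPart B + ω • upperPart B

lemma aorLeft_apply {n : ℕ} (B : Matrix (Fin n) (Fin n) ℝ) (γ : ℝ) (i j : Fin n) :
    aorLeft B γ i j = aorWeight γ i j * B i j := by
  rcases lt_trichotomy i j with h | h | h
  · simp [aorLeft, aorWeight, diagPart, lowerPart, h.ne, h.not_gt]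
  · simp [aorLeft, aorWeight, diagPart, lowerPart, h]
  · simp [aorLeft, aorWeight, diagPart, lowerPart, h.ne', h]

lemma aorRight_eq {n : ℕ} (B : Matrix (Fin n) (Fin n) ℝ) (γ ω : ℝ) :
    aorRight B γ ω = aorLeft B γ - ω • B := by
  ext i j
  rcases lt_trichotomy i j with h | h | h
  · simp [aorLeft, aorRight, diagPart, lowerPart, upperPart, h, h.ne, h.not_gt]
  · simp [aorLeft, aorRight, diagPart, lowerPart, upperPart, h]; ring
  · simp [aorLeft, aorRight, diagPart, lowerPart, upperPart, h.ne', h, h.not_gt]; ring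

lemma aorRight_nonneg {n : ℕ} (B : Matrix (Fin n) (Fin n) ℝ) (hZ : IsZMatrix B)
    (hd : ∀ i, 0 < B i i) (γ ω : ℝ) (hγω : γ ≤ ω) (hω0 : 0 ≤ ω) (hω1 : ω ≤ 1) (i j : Fin n) :
    0 ≤ aorRight B γ ω i j := by
  rw [aorRight_eq, Matrix.sub_apply, aorLeft_apply, Matrix.smul_apply, smul_eq_mul, ← sub_mul]
  rcases lt_trichotomy i j with h | h | h
  · simp only [aorWeight, h.ne, h.not_gt, if_false]
    nlinarith [hZ i j h.ne]
  · subst h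
    simp only [aorWeight, if_true]
    exact mul_nonneg (by linarith) (hd i).le
  · simp only [aorWeight, h.ne', h, if_false, if_true]
    nlinarith [hZ i j h.ne']

/-- Forward substitution preserves nonnegativity. -/
lemma nonneg_of_aorLeft_mulVec_nonneg {n : ℕ} (B : Matrix (Fin n) (Fin n) ℝ) (hZ : IsZMatrix B)
    (hd : ∀ i, 0 < B i i) (γ : ℝ) (hγ : 0 ≤ γ) (y : Fin n → ℝ)
    (hy : ∀ i, 0 ≤ (aorLeft B γ *ᵥ y) i) (i : Fin n) : 0 ≤ y i := by
  induction i using WellFoundedLT.induction with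
  | ind i ih =>
    have h1 := hy i
    rw [Matrix.mulVec, dotProduct, ← Finset.add_sum_erase _ _ (mem_univ i)] at h1
    have h2 : ∑ j ∈ univ.erase i, aorLeft B γ i j * y j ≤ 0 := by
      refine Finset.sum_nonpos fun j hj => ?_
      have hji : j ≠ i := (Finset.mem_erase.mp hj).1
      rw [aorLeft_apply]
      rcases lt_or_gt_of_ne hji with h | h
      · simp only [aorWeight, h.ne', h, if_false, if_true]
        exact mul_nonpos_of_nonpos_of_nonneg
          (mul_nonpos_of_nonneg_of_nonpos hγ (hZ i j h.ne')) (ih j h)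
      · simp [aorWeight, h.ne, h.not_gt]
    rw [aorLeft_apply] at h1
    simp only [aorWeight, if_true, one_mul] at h1
    exact nonneg_of_mul_nonneg_right (by linarith) (hd i)

lemma isUnit_det_aorLeft {n : ℕ} (B : Matrix (Fin n) (Fin n) ℝ) (hZ : IsZMatrix B)
    (hd : ∀ i, 0 < B i i) (γ : ℝ) (hγ : 0 ≤ γ) : IsUnit (aorLeft B γ).det := by
  rw [isUnit_iff_ne_zero]
  intro h0
  obtain ⟨v, hv, hv0⟩ := Matrix.exists_mulVec_eq_zero_iff.mpr h0
  apply hv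
  ext i
  have h1 := nonneg_of_aorLeft_mulVec_nonneg B hZ hd γ hγ v (by simp [hv0]) i
  have h2 := nonneg_of_aorLeft_mulVec_nonneg B hZ hd γ hγ (-v)
    (by simp [Matrix.mulVec_neg, hv0]) i
  simp only [Pi.neg_apply, Pi.zero_apply] at *
  linarith

lemma aorMatrix_eq {n : ℕ} (B : Matrix (Fin n) (Fin n) ℝ) (γ ω : ℝ) :
    aorMatrix B γ ω = (aorLeft B γ)⁻¹ * aorRight B γ ω := rfl

lemma aorLeft_mul_aorMatrix {n : ℕ} (B : Matrix (Fin n) (Fin n) ℝ) (hZ : IsZMatrix B)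
    (hd : ∀ i, 0 < B i i) (γ ω : ℝ) (hγ : 0 ≤ γ) :
    aorLeft B γ * aorMatrix B γ ω = aorRight B γ ω := by
  rw [aorMatrix_eq, Matrix.mul_nonsing_inv_cancel_left _ _ (isUnit_det_aorLeft B hZ hd γ hγ)]

lemma aorMatrix_nonneg {n : ℕ} (B : Matrix (Fin n) (Fin n) ℝ) (hZ : IsZMatrix B)
    (hd : ∀ i, 0 < B i i) (γ ω : ℝ) (hγ : 0 ≤ γ) (hγω : γ ≤ ω) (hω1 : ω ≤ 1) (i j : Fin n) :
    0 ≤ aorMatrix B γ ω i j := by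
  refine nonneg_of_aorLeft_mulVec_nonneg B hZ hd γ hγ (fun i => aorMatrix B γ ω i j) ?_ i
  intro k
  have h := congrFun (congrFun (aorLeft_mul_aorMatrix B hZ hd γ ω hγ) k) j
  rw [Matrix.mul_apply] at h
  simp only [Matrix.mulVec, dotProduct]
  rw [h]
  exact aorRight_nonneg B hZ hd γ ω hγω (hγ.trans hγω) hω1 k j

lemma mulVec_nonneg_of_nonneg {n : ℕ} (T : Matrix (Fin n) (Fin n) ℝ) (hT : ∀ i j, 0 ≤ T i j)
    (x : Fin n → ℝ) (hx : ∀ i, 0 ≤ x i) (i : Fin n) : 0 ≤ (T *ᵥ x) i := by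
  rw [Matrix.mulVec, dotProduct]
  exact Finset.sum_nonneg fun j _ => mul_nonneg (hT i j) (hx j)

open Filter Topology in
/-- The witness is `∑_{k < m} (l⁻¹ T)^k M⁻¹ 1` for large `m`, where `M` is the left factor of the
splitting and `T` the iteration matrix; then `l M x - N x = l (1 - M (l⁻¹ T)^m M⁻¹ 1)`. -/
lemma exists_pos_vector {n : ℕ} (A : Matrix (Fin n) (Fin n) ℝ) (hZ : IsZMatrix A)
    (hd : ∀ i, 0 < A i i) (γ ω : ℝ) (hγ : 0 ≤ γ) (hγω : γ ≤ ω) (hω1 : ω ≤ 1)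
    (l : ℝ) (hl : specRad (aorMatrix A γ ω) < l) :
    ∃ x : Fin n → ℝ, (∀ i, 0 < x i) ∧
      ∀ i, 0 < (l • (aorLeft A γ *ᵥ x) - aorRight A γ ω *ᵥ x) i := by
  have hl0 : 0 < l := lt_of_le_of_lt (specRad_nonneg _) hl
  set M := aorLeft A γ with hM
  set T := aorMatrix A γ ω with hT
  have hMT : M * T = aorRight A γ ω := aorLeft_mul_aorMatrix A hZ hd γ ω hγ
  have hMu := isUnit_det_aorLeft A hZ hd γ hγ
  set S : Matrix (Fin n) (Fin n) ℝ := l⁻¹ • T with hS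
  have hS0 : ∀ i j, 0 ≤ S i j := fun i j => by
    rw [hS, Matrix.smul_apply, smul_eq_mul]
    exact mul_nonneg (by positivity) (aorMatrix_nonneg A hZ hd γ ω hγ hγω hω1 i j)
  set v : Fin n → ℝ := M⁻¹ *ᵥ (fun _ => 1) with hv
  have hMv : M *ᵥ v = fun _ => 1 := by
    rw [hv, Matrix.mulVec_mulVec, Matrix.mul_nonsing_inv _ hMu, Matrix.one_mulVec]
  have hv0 : ∀ i, 0 ≤ v i :=
    nonneg_of_aorLeft_mulVec_nonneg A hZ hd γ hγ v (by intro i; rw [← hM, hMv]; norm_num)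
  have hvpos : ∀ i, 0 < v i := by
    intro i
    -- If `v i = 0` then the row `i` of `M v = 1` would be a sum of nonpositive terms.
    refine lt_of_le_of_ne (hv0 i) fun h0 => ?_
    have h1 : (M *ᵥ v) i ≤ 0 := by
      rw [Matrix.mulVec, dotProduct]
      refine Finset.sum_nonpos fun j _ => ?_
      by_cases hij : i = j
      · subst hij; rw [← h0, mul_zero]
      · refine mul_nonpos_of_nonpos_of_nonneg ?_ (hv0 j)
        rw [hM, aorLeft_apply]
        refine mul_nonpos_of_nonneg_of_nonpos ?_ (hZ i j hij)
        rw [aorWeight]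
        split_ifs <;> simp [hγ]
    rw [hMv] at h1
    norm_num at h1
  have hlim : Tendsto (fun m : ℕ => M *ᵥ (S ^ m *ᵥ v)) atTop (𝓝 0) := by
    rw [tendsto_pi_nhds]
    intro i
    have h1 : ∀ j, Tendsto (fun m : ℕ => (S ^ m *ᵥ v) j) atTop (𝓝 0) := fun j => by
      have := tendsto_finsetSum (univ : Finset (Fin n))
        (fun k _ => (tendsto_pow_entry T l hl j k).mul_const (v k))
      simpa [Matrix.mulVec, dotProduct] using this
    have := tendsto_finsetSum (univ : Finset (Fin n))
        (fun k _ => (h1 k).const_mul (M i k))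
    simpa [Matrix.mulVec, dotProduct] using this
  have hev : ∀ᶠ m : ℕ in atTop, ∀ i, (M *ᵥ (S ^ m *ᵥ v)) i < 1 := by
    rw [eventually_all]
    intro i
    exact ((tendsto_pi_nhds.mp hlim) i).eventually (gt_mem_nhds (by simp))
  obtain ⟨m, hm, hm1⟩ := (hev.and (eventually_ge_atTop 1)).exists
  have hSk : ∀ k : ℕ, ∀ i, 0 ≤ (S ^ k *ᵥ v) i := by
    intro k
    induction k with
    | zero => simpa using hv0
    | succ k ih =>
      rw [pow_succ', ← Matrix.mulVec_mulVec]
      exact mulVec_nonneg_of_nonneg S hS0 _ ih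
  refine ⟨(∑ k ∈ Finset.range m, S ^ k) *ᵥ v, fun i => ?_, fun i => ?_⟩
  · rw [Matrix.sum_mulVec, Finset.sum_apply]
    refine lt_of_lt_of_le (hvpos i) ?_
    have := Finset.single_le_sum (f := fun k => (S ^ k *ᵥ v) i) (fun k _ => hSk k i)
      (Finset.mem_range.mpr hm1 : 0 ∈ Finset.range m)
    simpa using this
  · have hg : (1 - S) * ∑ k ∈ Finset.range m, S ^ k = 1 - S ^ m := mul_neg_geom_sum S m
    have hlS : l • S = T := by rw [hS, smul_smul, mul_inv_cancel₀ hl0.ne', one_smul]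
    have hkey : l • M - aorRight A γ ω = l • (M * (1 - S)) := by
      rw [← hMT, mul_sub, mul_one, smul_sub, ← Matrix.mul_smul, hlS]
    rw [← Matrix.smul_mulVec, ← Matrix.sub_mulVec, hkey, Matrix.mulVec_mulVec,
      Matrix.smul_mul, Matrix.mul_assoc, hg, mul_sub, mul_one, Matrix.smul_mulVec,
      Matrix.sub_mulVec, hMv, ← Matrix.mulVec_mulVec]
    have := hm i
    simp only [Pi.smul_apply, Pi.sub_apply, smul_eq_mul]
    exact mul_pos hl0 (by linarith)

/-! ### The preconditioned matrix -/

lemma precond_nonneg {n : ℕ} (A : Matrix (Fin n) (Fin n) ℝ) (hZ : IsZMatrix A)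
    (α : Fin n → Fin n → ℝ) (hα : ∀ i j, i ≠ j → α i j ∈ Set.Icc (0 : ℝ) 1) (i j : Fin n) :
    0 ≤ precond α A i j := by
  simp only [precond, Matrix.of_apply]
  split_ifs with h
  · norm_num
  · nlinarith [mul_nonneg (hα i j h).1 (neg_nonneg.mpr (hZ i j h))]

/-- In `(P A) i j`, the terms `k = i` and `k = j` add up to `(1 - α i j) * A i j`, and every other
term is a product of a nonnegative and a nonpositive factor. -/
lemma isZMatrix_precond_mul {n : ℕ} (A : Matrix (Fin n) (Fin n) ℝ) (hZ : IsZMatrix A)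
    (hdiag : ∀ i, A i i = 1)
    (α : Fin n → Fin n → ℝ) (hα : ∀ i j, i ≠ j → α i j ∈ Set.Icc (0 : ℝ) 1) :
    IsZMatrix (precond α A * A) := by
  intro i j hij
  rw [Matrix.mul_apply, ← Finset.add_sum_erase _ _ (mem_univ i),
    ← Finset.add_sum_erase _ _ (Finset.mem_erase.mpr ⟨hij.symm, mem_univ j⟩)]
  have h1 : ∑ k ∈ (univ.erase i).erase j, precond α A i k * A k j ≤ 0 := by
    refine Finset.sum_nonpos fun k hk => ?_
    exact mul_nonpos_of_nonneg_of_nonpos (precond_nonneg A hZ α hα i k)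
      (hZ k j (Finset.mem_erase.mp hk).1)
  have h2 : precond α A i i * A i j + precond α A i j * A j j ≤ 0 := by
    simp only [precond, Matrix.of_apply, if_true, hij, if_false, hdiag]
    nlinarith [hZ i j hij, (hα i j hij).2]
  linarith

/-- The comparison `M_{PA} x ≤ P M_A x`. Weighting column `j` by `c i j`, both sides are sums over
`k` of `P i k` times a weighted row `k` of `A`, with weights `c i j` and `c k j` respectively. -/
lemma aorLeft_precond_mulVec_le {n : ℕ} (A : Matrix (Fin n) (Fin n) ℝ) (hZ : IsZMatrix A)
    (hdiag : ∀ i, A i i = 1) (γ : ℝ) (hγ : 0 ≤ γ) (hγ1 : γ ≤ 1)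
    (α : Fin n → Fin n → ℝ) (hα : ∀ i j, i ≠ j → α i j ∈ Set.Icc (0 : ℝ) 1)
    (x : Fin n → ℝ) (hx : ∀ i, 0 < x i) (hMx : ∀ i, 0 ≤ (aorLeft A γ *ᵥ x) i) (i : Fin n) :
    (aorLeft (precond α A * A) γ *ᵥ x) i ≤ (precond α A *ᵥ (aorLeft A γ *ᵥ x)) i := by
  have h1 : (aorLeft (precond α A * A) γ *ᵥ x) i
      = ∑ k, precond α A i k * ∑ j, aorWeight γ i j * A k j * x j := by
    simp only [Matrix.mulVec, dotProduct, aorLeft_apply, Matrix.mul_apply, Finset.mul_sum,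
      Finset.sum_mul]
    rw [Finset.sum_comm]
    exact Finset.sum_congr rfl fun k _ => Finset.sum_congr rfl fun j _ => by ring
  rw [h1, Matrix.mulVec, dotProduct]
  refine Finset.sum_le_sum fun k _ =>
    mul_le_mul_of_nonneg_left ?_ (precond_nonneg A hZ α hα i k)
  -- For `k > i` only columns `j ≤ i < k` carry weight on the left, which is thus nonpositive.
  -- For `k < i` the two sums compare term by term.
  rcases lt_trichotomy k i with hki | hki | hki
  · simp only [Matrix.mulVec, dotProduct, aorLeft_apply]
    refine Finset.sum_le_sum fun j _ => mul_le_mul_of_nonneg_right ?_ (hx j).le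
    rcases lt_trichotomy j k with hjk | hjk | hjk
    · have : j < i := hjk.trans hki
      simp [aorWeight, hjk, hjk.ne', this, this.ne']
    · subst hjk
      simpa [aorWeight, hki, hki.ne', hdiag] using hγ1
    · have h2 : aorWeight γ k j = 0 := by simp [aorWeight, hjk.ne, hjk.not_gt]
      rw [h2, zero_mul]
      refine mul_nonpos_of_nonneg_of_nonpos ?_ (hZ k j hjk.ne)
      rw [aorWeight]
      split_ifs <;> simp [hγ]
  · subst hki
    simp only [Matrix.mulVec, dotProduct, aorLeft_apply]
    exact le_rfl
  · refine le_trans (Finset.sum_nonpos fun j _ => ?_) (hMx k)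
    refine mul_nonpos_of_nonpos_of_nonneg ?_ (hx j).le
    rcases lt_or_ge i j with hij | hij
    · simp [aorWeight, hij.ne, hij.not_gt]
    · refine mul_nonpos_of_nonneg_of_nonpos ?_ (hZ k j (lt_of_le_of_lt hij hki).ne')
      rw [aorWeight]
      split_ifs <;> simp [hγ]

lemma specRad_precond_le {n : ℕ} (A : Matrix (Fin n) (Fin n) ℝ) (hZ : IsZMatrix A)
    (hdiag : ∀ i, A i i = 1)
    (γ ω : ℝ) (hγ : 0 ≤ γ) (hγω : γ ≤ ω) (hω1 : ω ≤ 1) (hω : ω ≠ 0)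
    (α : Fin n → Fin n → ℝ) (hα : ∀ i j, i ≠ j → α i j ∈ Set.Icc (0 : ℝ) 1)
    (l : ℝ) (hl : specRad (aorMatrix A γ ω) < l) (hl1 : l < 1) :
    specRad (aorMatrix (precond α A * A) γ ω) ≤ l := by
  have hω0 : 0 < ω := lt_of_le_of_ne (hγ.trans hγω) hω.symm
  have hl0 : 0 < l := lt_of_le_of_lt (specRad_nonneg _) hl
  have hd : ∀ i, 0 < A i i := fun i => by rw [hdiag]; norm_num
  obtain ⟨x, hx, hr⟩ := exists_pos_vector A hZ hd γ ω hγ hγω hω1 l hl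
  set P := precond α A with hP
  set B := P * A with hB
  have hP0 : ∀ i j, 0 ≤ P i j := precond_nonneg A hZ α hα
  have hBZ : IsZMatrix B := isZMatrix_precond_mul A hZ hdiag α hα
  set r : Fin n → ℝ := l • (aorLeft A γ *ᵥ x) - aorRight A γ ω *ᵥ x with hr_def
  have hMx : ∀ i, 0 ≤ (aorLeft A γ *ᵥ x) i := fun i => by
    have h1 := mulVec_nonneg_of_nonneg _ (aorRight_nonneg A hZ hd γ ω hγω hω0.le hω1) x
      (fun i => (hx i).le) i
    have h2 := hr i
    simp only [hr_def, Pi.sub_apply, Pi.smul_apply, smul_eq_mul] at h2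
    exact (pos_of_mul_pos_right (by linarith : 0 < l * (aorLeft A γ *ᵥ x) i) hl0.le).le
  have hrA : ω • (A *ᵥ x) = (1 - l) • (aorLeft A γ *ᵥ x) + r := by
    rw [hr_def, aorRight_eq, Matrix.sub_mulVec, Matrix.smul_mulVec]
    module
  have hAx : ∀ i, 0 < (A *ᵥ x) i := fun i => by
    have h1 := congrFun hrA i
    simp only [Pi.add_apply, Pi.smul_apply, smul_eq_mul] at h1
    have h2 := mul_nonneg (by linarith : 0 ≤ 1 - l) (hMx i)
    have h3 := hr i
    exact pos_of_mul_pos_right (by linarith : 0 < ω * (A *ᵥ x) i) hω0.le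
  have hBx : ∀ i, 0 < (B *ᵥ x) i := fun i => by
    rw [hB, ← Matrix.mulVec_mulVec]
    refine lt_of_lt_of_le (hAx i) ?_
    rw [Matrix.mulVec.eq_def P, dotProduct]
    have h1 := Finset.single_le_sum (f := fun k => P i k * (A *ᵥ x) k)
      (fun k _ => mul_nonneg (hP0 i k) (hAx k).le) (mem_univ i)
    have h2 : P i i = 1 := by simp [hP, precond]
    simpa only [h2, one_mul] using h1
  have hBd : ∀ i, 0 < B i i := fun i => by
    have h1 := hBx i
    rw [Matrix.mulVec, dotProduct, ← Finset.add_sum_erase _ _ (mem_univ i)] at h1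
    have h2 : ∑ j ∈ univ.erase i, B i j * x j ≤ 0 := Finset.sum_nonpos fun j hj =>
      mul_nonpos_of_nonpos_of_nonneg (hBZ i j (Finset.mem_erase.mp hj).1.symm) (hx j).le
    exact pos_of_mul_pos_left (by linarith : 0 < B i i * x i) (hx i).le
  refine specRad_le_of_mulVec_le _ (aorMatrix_nonneg B hBZ hBd γ ω hγ hγω hω1) x hx l hl0.le ?_
  have hfin := nonneg_of_aorLeft_mulVec_nonneg B hBZ hBd γ hγ
    (l • x - aorMatrix B γ ω *ᵥ x) ?_
  · intro i
    have := hfin i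
    simp only [Pi.sub_apply, Pi.smul_apply, smul_eq_mul] at this
    linarith
  · intro i
    have h1 : aorLeft B γ *ᵥ (l • x - aorMatrix B γ ω *ᵥ x)
        = P *ᵥ r + (1 - l) • (P *ᵥ (aorLeft A γ *ᵥ x) - aorLeft B γ *ᵥ x) := by
      have h2 : P *ᵥ (ω • (A *ᵥ x)) = P *ᵥ ((1 - l) • (aorLeft A γ *ᵥ x) + r) := by rw [hrA]
      rw [Matrix.mulVec_smul, Matrix.mulVec_mulVec, Matrix.mulVec_add, Matrix.mulVec_smul,
        ← hB] at h2
      have h3 : P *ᵥ r = ω • (B *ᵥ x) - (1 - l) • (P *ᵥ (aorLeft A γ *ᵥ x)) := by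
        rw [h2]; abel
      rw [h3, Matrix.mulVec_sub, Matrix.mulVec_smul, Matrix.mulVec_mulVec,
        aorLeft_mul_aorMatrix B hBZ hBd γ ω hγ, aorRight_eq, Matrix.sub_mulVec,
        Matrix.smul_mulVec]
      module
    rw [h1]
    have h4 := mulVec_nonneg_of_nonneg P hP0 r (fun i => (hr i).le) i
    have h5 := aorLeft_precond_mulVec_le A hZ hdiag γ hγ (hγω.trans hω1) α hα x hx hMx i
    simp only [Pi.add_apply, Pi.smul_apply, Pi.sub_apply, smul_eq_mul]
    exact add_nonneg h4 (mul_nonneg (by linarith) (by linarith))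

/-- If `ρ(L_{γ,ω}) < 1` then the preconditioned AOR iteration matrix
satisfies `ρ(L̃_{γ,ω}) ≤ ρ(L_{γ,ω}) < 1`. -/
theorem stmt8 {n : ℕ} (A : Matrix (Fin n) (Fin n) ℝ) (hZ : IsZMatrix A)
    (hdiag : ∀ i, A i i = 1) (hdet : IsUnit A.det)
    (γ ω : ℝ) (h0γ : 0 ≤ γ) (hγω : γ ≤ ω) (hω1 : ω ≤ 1) (hω : ω ≠ 0)
    (α : Fin n → Fin n → ℝ) (hα : ∀ i j, i ≠ j → α i j ∈ Set.Icc (0 : ℝ) 1)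
    (hρ : specRad (aorMatrix A γ ω) < 1) :
    specRad (aorMatrix (precond α A * A) γ ω) ≤ specRad (aorMatrix A γ ω) ∧
      specRad (aorMatrix A γ ω) < 1 := by
  refine ⟨le_of_forall_gt_imp_ge_of_dense fun l hl => ?_, hρ⟩
  rcases lt_or_ge l 1 with h | h
  · exact specRad_precond_le A hZ hdiag γ ω h0γ hγω hω1 hω α hα l hl h
  · obtain ⟨t, ht1, ht2⟩ := exists_between hρ
    exact (specRad_precond_le A hZ hdiag γ ω h0γ hγω hω1 hω α hα t ht1 ht2).trans
      (ht2.le.trans h)
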